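/- Let X and Y be compact metric spaces, let 𝒯 : P(X) × P(Y) → ℝ ∪ {+∞} be a backward linear transfer, and let T denote the extension of its Kantorovich operator defined by Tg(x) := sup{ ∫_Y g dσ − 𝒯(δ_x,σ) : σ ∈ P(Y) } for upper semicontinuous bounded-above g : Y → [−∞,∞). Then: (1) for every (μ,ν) ∈ P(X) × P(Y), 𝒯(μ,ν) = sup{ ∫_Y g dν − ∫_X Tg dμ : g upper semicontinuous, bounded above and bounded below on Y }; (2) for every μ ∈ P(X) and every upper semicontinuous bounded-above g : Y → [−∞,∞), sup_{σ∈P(Y)} { ∫_Y g dσ − 𝒯(μ,σ) } = ∫_X Tg dμ. -/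

import Mathlib

open MeasureTheory Topology Filter Set
open scoped ENNReal NNReal

noncomputable section

/-- The positive part of an extended real number, as an element of `ℝ≥0∞`. -/
def epos (a : EReal) : ℝ≥0∞ := if a = ⊤ then ⊤ else ENNReal.ofReal a.toReal

/-- Signed integral of an `EReal`-valued function (the natural value when `f` is
bounded above or bounded below). -/
def eint {α : Type*} [MeasurableSpace α] (μ : Measure α) (f : α → EReal) : EReal :=
  ((∫⁻ x, epos (f x) ∂μ : ℝ≥0∞) : EReal) - ((∫⁻ x, epos (-(f x)) ∂μ : ℝ≥0∞) : EReal)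

/-- The Dirac measure at a point, as a probability measure. -/
def diracP {α : Type*} [MeasurableSpace α] (x : α) : ProbabilityMeasure α :=
  ⟨Measure.dirac x, inferInstance⟩

/-- The backward Kantorovich operator of a transfer functional `𝒯`, on continuous
functions: `T⁻g(x) = sup_{σ ∈ P(Y)} { ∫ g dσ − 𝒯(δ_x, σ) }`. -/
def TopC {X Y : Type*} [MeasurableSpace X] [TopologicalSpace Y] [MeasurableSpace Y]
    (𝒯 : ProbabilityMeasure X → ProbabilityMeasure Y → EReal)
    (g : C(Y, ℝ)) (x : X) : EReal :=
  ⨆ σ : ProbabilityMeasure Y, (((∫ y, g y ∂(σ : Measure Y)) : ℝ) : EReal) - 𝒯 (diracP x) σ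

/-- The backward Kantorovich operator of a transfer functional `𝒯`, extended to
extended-real-valued functions. -/
def TopU {X Y : Type*} [MeasurableSpace X] [MeasurableSpace Y]
    (𝒯 : ProbabilityMeasure X → ProbabilityMeasure Y → EReal)
    (g : Y → EReal) (x : X) : EReal :=
  ⨆ σ : ProbabilityMeasure Y, eint (σ : Measure Y) g - 𝒯 (diracP x) σ

/-- A backward linear transfer: a proper, bounded below, jointly convex,
weak*-lower semicontinuous functional on `P(X) × P(Y)` with values in `ℝ ∪ {+∞}`,
such that the Legendre transform of each partial map `𝒯(μ,·)` is given by
integrating the backward Kantorovich operator against `μ`. -/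
def IsBLT {X Y : Type*} [TopologicalSpace X] [MeasurableSpace X] [OpensMeasurableSpace X]
    [TopologicalSpace Y] [MeasurableSpace Y] [OpensMeasurableSpace Y]
    (𝒯 : ProbabilityMeasure X → ProbabilityMeasure Y → EReal) : Prop :=
  (∀ μ ν, 𝒯 μ ν ≠ ⊥) ∧
  (∃ μ ν, 𝒯 μ ν ≠ ⊤) ∧
  (∃ m : ℝ, ∀ μ ν, (m : EReal) ≤ 𝒯 μ ν) ∧
  (∀ (μ₁ μ₂ : ProbabilityMeasure X) (ν₁ ν₂ : ProbabilityMeasure Y)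
      (μ : ProbabilityMeasure X) (ν : ProbabilityMeasure Y) (a b : ℝ≥0),
      a + b = 1 →
      (μ : Measure X) = a • (μ₁ : Measure X) + b • (μ₂ : Measure X) →
      (ν : Measure Y) = a • (ν₁ : Measure Y) + b • (ν₂ : Measure Y) →
      𝒯 μ ν ≤ ((a : ℝ) : EReal) * 𝒯 μ₁ ν₁ + ((b : ℝ) : EReal) * 𝒯 μ₂ ν₂) ∧
  LowerSemicontinuous (fun p : ProbabilityMeasure X × ProbabilityMeasure Y => 𝒯 p.1 p.2) ∧
  (∀ (μ : ProbabilityMeasure X) (g : C(Y, ℝ)),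
      (⨆ σ : ProbabilityMeasure Y,
        (((∫ y, g y ∂(σ : Measure Y)) : ℝ) : EReal) - 𝒯 μ σ)
        = eint (μ : Measure X) (TopC 𝒯 g))

/-- A transfer is standard if every Dirac measure admits a finite-cost target. -/
def IsStandardT {X Y : Type*} [MeasurableSpace X] [MeasurableSpace Y]
    (𝒯 : ProbabilityMeasure X → ProbabilityMeasure Y → EReal) : Prop :=
  ∀ x : X, ∃ σ : ProbabilityMeasure Y, 𝒯 (diracP x) σ ≠ ⊤

/-!
An upper semicontinuous `g` bounded above is the limit of a decreasing sequence of continuous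
functions `f n`. As `P(Y)` is compact and `𝒯 μ` is lower semicontinuous, the supremum over `σ`
commutes with the decreasing limit, so `sup_σ (∫ f n dσ - 𝒯 μ σ)` decreases to
`sup_σ (∫ g dσ - 𝒯 μ σ)`. Taking `μ = δ_x` gives `T (f n) x ↓ T g x`, and monotone convergence
carries the identity `sup_σ (∫ f n dσ - 𝒯 μ σ) = ∫ T (f n) dμ` over to `g`. Thus `g ↦ ∫ T g dμ` is
the Legendre transform of the convex lower semicontinuous functional `𝒯 μ`, and the formula for
`𝒯 μ ν` is Fenchel–Moreau duality: a point strictly below the epigraph of `𝒯 μ` is separated from it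
by a continuous function.
-/

section EReal

lemma tendsto_ereal_sub {ι : Type*} {l : Filter ι} {u v : ι → EReal} {a b : EReal}
    (h_top : a ≠ ⊤ ∨ b ≠ ⊤) (h_bot : a ≠ ⊥ ∨ b ≠ ⊥) (hu : Tendsto u l (𝓝 a))
    (hv : Tendsto v l (𝓝 b)) : Tendsto (fun i => u i - v i) l (𝓝 (a - b)) :=
  (EReal.continuousAt_add (p := (a, -b)) (by simpa using h_top) (by simpa using h_bot)).tendsto.comp
    (hu.prodMk_nhds ((continuous_neg.tendsto b).comp hv))

lemma ereal_sub_le_of_sub_le {a b c : EReal} (hb : b ≠ ⊥) (h : a - b ≤ c) : a - c ≤ b := by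
  rcases eq_or_ne b ⊤ with rfl | hb'
  · exact le_top
  · exact EReal.sub_le_of_le_add' ((EReal.sub_le_iff_le_add (.inl hb) (.inl hb')).1 h)

end EReal

section ExtendedIntegral

variable {α : Type*} [MeasurableSpace α]

lemma epos_eq_toENNReal : epos = EReal.toENNReal :=
  rfl

lemma epos_mono : Monotone epos :=
  epos_eq_toENNReal ▸ fun _ _ h => EReal.toENNReal_le_toENNReal h

lemma continuous_epos : Continuous epos :=
  epos_eq_toENNReal ▸ EReal.continuous_toENNReal

lemma epos_coe (r : ℝ) : epos r = ENNReal.ofReal r := by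
  rw [epos_eq_toENNReal, EReal.toENNReal_of_ne_top (EReal.coe_ne_top r), EReal.toReal_coe]

lemma eint_mono (μ : Measure α) {f g : α → EReal} (h : f ≤ g) : eint μ f ≤ eint μ g :=
  EReal.sub_le_sub
    (EReal.coe_ennreal_le_coe_ennreal_iff.2 (lintegral_mono fun x => epos_mono (h x)))
    (EReal.coe_ennreal_le_coe_ennreal_iff.2
      (lintegral_mono fun x => epos_mono (EReal.neg_le_neg_iff.2 (h x))))

lemma eint_coe (μ : Measure α) {f : α → ℝ} (hf : Integrable f μ) :
    eint μ (fun x => (f x : EReal)) = ((∫ x, f x ∂μ : ℝ) : EReal) := by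
  simp only [eint, ← EReal.coe_neg, epos_coe]
  have hneg : ∫⁻ x, ENNReal.ofReal (-f x) ∂μ ≠ ⊤ := hf.neg.lintegral_lt_top.ne
  rw [integral_eq_lintegral_pos_part_sub_lintegral_neg_part hf, EReal.coe_sub,
    EReal.coe_ennreal_toReal hf.lintegral_lt_top.ne, EReal.coe_ennreal_toReal hneg]

lemma eint_le_of_le (μ : Measure α) [IsProbabilityMeasure μ] {f : α → EReal} {C : ℝ}
    (h : ∀ x, f x ≤ C) : eint μ f ≤ C :=
  calc eint μ f ≤ eint μ fun _ => (C : EReal) := eint_mono μ h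
    _ = C := by simp [eint_coe μ (integrable_const C)]

lemma tendsto_eint_of_antitone (μ : Measure α) [IsFiniteMeasure μ] {f : ℕ → α → EReal}
    {g : α → EReal} (hf : ∀ n, Measurable (f n)) (hanti : Antitone f) {C : ℝ}
    (hC : ∀ x, f 0 x ≤ C) (hlim : ∀ x, Tendsto (fun n => f n x) atTop (𝓝 (g x))) :
    Tendsto (fun n => eint μ (f n)) atTop (𝓝 (eint μ g)) := by
  have hbound : ∀ h : α → EReal, h ≤ f 0 → ∫⁻ x, epos (h x) ∂μ ≠ ⊤ := fun h hh =>
    (calc ∫⁻ x, epos (h x) ∂μ ≤ ∫⁻ _, ENNReal.ofReal C ∂μ :=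
          lintegral_mono fun x => (epos_mono ((hh x).trans (hC x))).trans_eq (epos_coe C)
      _ = ENNReal.ofReal C * μ univ := lintegral_const _
      _ < ⊤ := ENNReal.mul_lt_top ENNReal.ofReal_lt_top (measure_lt_top μ univ)).ne
  have hg : g ≤ f 0 := fun x => le_of_tendsto' (hlim x) fun n => hanti n.zero_le x
  have hpos : Tendsto (fun n => ∫⁻ x, epos (f n x) ∂μ) atTop (𝓝 (∫⁻ x, epos (g x) ∂μ)) :=
    lintegral_tendsto_of_tendsto_of_antitone
      (fun n => (continuous_epos.measurable.comp (hf n)).aemeasurable)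
      (ae_of_all μ fun x _ _ hij => epos_mono (hanti hij x)) (hbound _ le_rfl)
      (ae_of_all μ fun x => (continuous_epos.tendsto _).comp (hlim x))
  have hneg : Tendsto (fun n => ∫⁻ x, epos (-f n x) ∂μ) atTop (𝓝 (∫⁻ x, epos (-g x) ∂μ)) :=
    lintegral_tendsto_of_tendsto_of_monotone
      (fun n => (continuous_epos.measurable.comp (hf n).neg).aemeasurable)
      (ae_of_all μ fun x _ _ hij => epos_mono (EReal.neg_le_neg_iff.2 (hanti hij x)))
      (ae_of_all μ fun x => ((continuous_epos.comp continuous_neg).tendsto _).comp (hlim x))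
  exact tendsto_ereal_sub (.inl (by simpa using hbound g hg)) (.inl (by simp))
    ((continuous_coe_ennreal_ereal.tendsto _).comp hpos)
    ((continuous_coe_ennreal_ereal.tendsto _).comp hneg)

end ExtendedIntegral

section Semicontinuity

lemma exists_eq_iSup_of_upperSemicontinuous {K β : Type*} [TopologicalSpace K] [CompactSpace K]
    [Nonempty K] [CompleteLinearOrder β] {f : K → β} (hf : UpperSemicontinuous f) :
    ∃ k, f k = ⨆ k, f k := by
  obtain ⟨k, -, hk⟩ :=
    (hf.upperSemicontinuousOn univ).exists_isMaxOn univ_nonempty isCompact_univ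
  exact ⟨k, le_antisymm (le_iSup f k) (iSup_le fun k' => hk (mem_univ k'))⟩

lemma iSup_iInf_eq_iInf_iSup_of_antitone {K β : Type*} [TopologicalSpace K] [CompactSpace K]
    [CompleteLinearOrder β] {Φ : ℕ → K → β} (husc : ∀ n, UpperSemicontinuous (Φ n))
    (hanti : Antitone Φ) : ⨆ k, ⨅ n, Φ n k = ⨅ n, ⨆ k, Φ n k := by
  refine le_antisymm (iSup_iInf_le_iInf_iSup _) ?_
  rcases isEmpty_or_nonempty K with hK | hK
  · simp
  set d := ⨅ n, ⨆ k, Φ n k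
  have hclosed : ∀ n, IsClosed (Φ n ⁻¹' Ici d) := fun n =>
    upperSemicontinuous_iff_isClosed_preimage.1 (husc n) d
  obtain ⟨k, hk⟩ := IsCompact.nonempty_iInter_of_sequence_nonempty_isCompact_isClosed
    (fun n => Φ n ⁻¹' Ici d) (fun n k hk => le_trans hk (hanti n.le_succ k))
    (fun n => (exists_eq_iSup_of_upperSemicontinuous (husc n)).imp fun k hk =>
      (iInf_le _ n).trans_eq hk.symm)
    (hclosed 0).isCompact hclosed
  exact le_iSup_of_le k (le_iInf fun n => mem_iInter.1 hk n)

lemma upperSemicontinuous_iSup_of_compactSpace {Z K β : Type*} [TopologicalSpace Z]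
    [TopologicalSpace K] [CompactSpace K] [CompleteLinearOrder β] {Ψ : Z → K → β}
    (h : UpperSemicontinuous fun p : Z × K => Ψ p.1 p.2) :
    UpperSemicontinuous fun z => ⨆ k, Ψ z k := by
  rcases isEmpty_or_nonempty K with hK | hK
  · simpa only [iSup_of_empty] using upperSemicontinuous_const
  intro z c hc
  have hlt : ∀ᶠ z' in 𝓝 z, ∀ k ∈ (univ : Set K), Ψ z' k < c :=
    isCompact_univ.eventually_forall_of_forall_eventually fun k _ =>
      h (z, k) c ((le_iSup (Ψ z) k).trans_lt hc)
  filter_upwards [hlt] with z' hz'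
  obtain ⟨k, hk⟩ := exists_eq_iSup_of_upperSemicontinuous
    (h.comp (continuous_const.prodMk continuous_id : Continuous fun k : K => (z', k)))
  exact hk.symm.trans_lt (hz' k (mem_univ k))

lemma upperSemicontinuous_coe_continuousMap {Y : Type*} [TopologicalSpace Y] (g : C(Y, ℝ)) :
    UpperSemicontinuous fun y => (g y : EReal) :=
  (continuous_coe_real_ereal.comp g.continuous).upperSemicontinuous

lemma exists_forall_coe_continuousMap_le {Y : Type*} [TopologicalSpace Y] [CompactSpace Y]
    (g : C(Y, ℝ)) : ∃ M : ℝ, ∀ y, (g y : EReal) ≤ M :=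
  (isCompact_range g.continuous).bddAbove.imp fun _ hM y =>
    EReal.coe_le_coe_iff.2 (hM (mem_range_self y))

lemma exists_forall_le_coe_continuousMap {Y : Type*} [TopologicalSpace Y] [CompactSpace Y]
    (g : C(Y, ℝ)) : ∃ m : ℝ, ∀ y, (m : EReal) ≤ g y :=
  (isCompact_range g.continuous).bddBelow.imp fun _ hm y =>
    EReal.coe_le_coe_iff.2 (hm (mem_range_self y))

lemma exists_continuousMap_ge_of_lt {Y : Type*} [PseudoMetricSpace Y] {g : Y → EReal}
    (hg : UpperSemicontinuous g) {M : ℝ} (hM : ∀ y, g y ≤ M) {y : Y} {c : ℝ} (hc : g y < c) :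
    ∃ h : C(Y, ℝ), (∀ z, g z ≤ h z) ∧ h y = c := by
  obtain ⟨δ, hδ, hball⟩ := Metric.eventually_nhds_iff.1 (hg y c hc)
  refine ⟨⟨fun z => c + |M - c| / δ * dist z y, by fun_prop⟩, fun z => ?_, by simp⟩
  by_cases hz : dist z y < δ
  · exact (hball hz).le.trans (EReal.coe_le_coe_iff.2 (le_add_of_nonneg_right (by positivity)))
  · refine (hM z).trans (EReal.coe_le_coe_iff.2 ?_)
    have h_slope : |M - c| ≤ |M - c| / δ * dist z y := by
      calc |M - c| = |M - c| / δ * δ := (div_mul_cancel₀ _ hδ.ne').symm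
        _ ≤ _ := by gcongr; exact not_lt.1 hz
    change M ≤ c + |M - c| / δ * dist z y
    linarith [le_abs_self (M - c)]

lemma isGLB_continuousMap_ge {Y : Type*} [PseudoMetricSpace Y] {g : Y → EReal}
    (hg : UpperSemicontinuous g) {M : ℝ} (hM : ∀ y, g y ≤ M) :
    IsGLB ((fun (h : C(Y, ℝ)) y => (h y : EReal)) '' {h | ∀ y, g y ≤ h y}) g := by
  refine ⟨forall_mem_image.2 fun h hgh => hgh, fun f hf y => le_of_forall_gt fun a ha => ?_⟩
  obtain ⟨c, hgc, hca⟩ := EReal.lt_iff_exists_real_btwn.1 ha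
  obtain ⟨h, hgh, rfl⟩ := exists_continuousMap_ge_of_lt hg hM hgc
  exact (hf (mem_image_of_mem _ hgh) y).trans_lt hca

lemma exists_seq_continuousMap_isGLB {Y : Type*} [PseudoMetricSpace Y]
    [HereditarilyLindelofSpace Y] {g : Y → EReal} (hg : UpperSemicontinuous g) {M : ℝ}
    (hM : ∀ y, g y ≤ M) :
    ∃ u : ℕ → C(Y, ℝ), ∀ y, IsGLB (range fun n => (u n y : EReal)) (g y) := by
  rcases isEmpty_or_nonempty Y with hY | ⟨⟨y₀⟩⟩
  · exact ⟨fun _ => 0, fun y => hY.elim y⟩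
  obtain ⟨S, hS, hScount, hglb⟩ := exists_countable_upperSemicontinuous_isGLB
    (forall_mem_image.2 fun h _ => upperSemicontinuous_coe_continuousMap h)
    (isGLB_continuousMap_ge hg hM)
  have hne : S.Nonempty := by
    rw [nonempty_iff_ne_empty]
    rintro rfl
    have h_top : g = ⊤ := top_unique (hglb.2 (by simp))
    exact absurd (hM y₀) (by simp [h_top])
  obtain ⟨v, rfl⟩ := hScount.exists_eq_range hne
  choose u _ hu using fun n => hS (mem_range_self n)
  refine ⟨u, fun y => ?_⟩
  have := isGLB_pi.1 hglb y
  rw [← range_comp] at this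
  convert this using 3 with n
  exact congrFun (hu n) y

lemma exists_antitone_continuousMap_tendsto {Y : Type*} [PseudoMetricSpace Y]
    [HereditarilyLindelofSpace Y] {g : Y → EReal} (hg : UpperSemicontinuous g) {M : ℝ}
    (hM : ∀ y, g y ≤ M) :
    ∃ f : ℕ → C(Y, ℝ), Antitone f ∧ ∀ y, Tendsto (fun n => (f n y : EReal)) atTop (𝓝 (g y)) := by
  obtain ⟨u, hu⟩ := exists_seq_continuousMap_isGLB hg hM
  have hf_anti : Antitone fun n => (Finset.range (n + 1)).inf' Finset.nonempty_range_add_one u :=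
    fun m n hmn => Finset.inf'_mono u (Finset.range_mono (by gcongr)) _
  refine ⟨_, hf_anti, fun y => ?_⟩
  have hglb : IsGLB (range fun n =>
      (((Finset.range (n + 1)).inf' Finset.nonempty_range_add_one u y : ℝ) : EReal)) (g y) := by
    refine ⟨forall_mem_range.2 fun n => ?_, fun a ha => (hu y).2 (forall_mem_range.2 fun n => ?_)⟩
    · exact Finset.inf'_induction (p := fun h : C(Y, ℝ) => g y ≤ h y) _ u
        (fun h₁ hh₁ h₂ hh₂ =>
          (le_inf hh₁ hh₂).trans_eq (EReal.coe_strictMono.monotone.map_inf _ _).symm)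
        fun k _ => (hu y).1 (mem_range_self k)
    · exact (ha (mem_range_self n)).trans
        (EReal.coe_le_coe_iff.2 (Finset.inf'_le u (Finset.self_mem_range_succ n) y))
  exact tendsto_atTop_isGLB (fun m n hmn => EReal.coe_le_coe_iff.2 (hf_anti hmn y)) hglb

end Semicontinuity

section Separation

variable {V : Type*} [AddCommGroup V] [Module ℝ V] [TopologicalSpace V] [IsTopologicalAddGroup V]
  [ContinuousSMul ℝ V] [LocallyConvexSpace ℝ V]

lemma exists_strongDual_sub_le_of_notMem {E : Set (V × ℝ)} (hE : IsClosed E)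
    (hconv : Convex ℝ E) (hup : ∀ ⦃x s t⦄, (x, s) ∈ E → s ≤ t → (x, t) ∈ E) {m : ℝ}
    (hm : ∀ p ∈ E, m ≤ p.2) {x₀ : V} {c : ℝ} (hx₀ : (x₀, c) ∉ E) :
    ∃ ℓ : StrongDual ℝ V, ∀ p ∈ E, ℓ p.1 - p.2 ≤ ℓ x₀ - c := by
  obtain ⟨f, u, hfx₀, hfE⟩ := geometric_hahn_banach_point_closed hconv hE hx₀
  have hf : ∀ (x : V) (t : ℝ), f (x, t) = f (x, 0) + t * f (0, 1) := fun x t => by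
    rw [← smul_eq_mul, ← map_smul, ← map_add]
    simp
  rcases E.eq_empty_or_nonempty with rfl | ⟨⟨x₁, t₁⟩, h₁⟩
  · exact ⟨0, fun p hp => hp.elim⟩
  have hslope : 0 ≤ f (0, 1) := by
    by_contra! hneg
    have hgap : 0 < f (x₁, t₁) - u := sub_pos.2 (hfE _ h₁)
    have h_mem : (x₁, t₁ + (f (x₁, t₁) - u) / -f (0, 1)) ∈ E :=
      hup h₁ (le_add_of_nonneg_right (div_pos hgap (neg_pos.2 hneg)).le)
    refine (hfE _ h_mem).ne' ?_
    rw [hf, add_mul, div_neg, neg_mul, div_mul_cancel₀ _ hneg.ne, hf x₁ t₁]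
    ring
  -- Tilting `f` by a small multiple of the height coordinate, which is bounded below on `E`,
  -- makes the separating hyperplane non-vertical.
  obtain ⟨ε, hε, hε_lt⟩ := exists_pos_mul_lt (sub_pos.2 hfx₀) (c - m)
  set k := f (0, 1) + ε
  have hk : 0 < k := by positivity
  refine ⟨-k⁻¹ • f.comp (ContinuousLinearMap.inl ℝ V ℝ), fun ⟨x, t⟩ hp => ?_⟩
  have h_sep : f (x₀, 0) + c * k ≤ f (x, 0) + t * k := by
    have h_height : m * ε ≤ t * ε := mul_le_mul_of_nonneg_right (hm _ hp) hε.le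
    have h_above : u < f (x, 0) + t * f (0, 1) := hf x t ▸ hfE _ hp
    rw [hf] at hε_lt
    linarith
  have h_div := mul_le_mul_of_nonneg_left h_sep (inv_pos.2 hk).le
  simp only [mul_add, mul_comm _ k, inv_mul_cancel_left₀ hk.ne'] at h_div
  change -k⁻¹ * f (x, 0) - t ≤ -k⁻¹ * f (x₀, 0) - c
  linarith

end Separation

section WeakDual

variable {W : Type*} [AddCommGroup W] [Module ℝ W] [TopologicalSpace W]

instance locallyConvexSpace_weakDual : LocallyConvexSpace ℝ (WeakDual ℝ W) :=
  inferInstanceAs (LocallyConvexSpace ℝ (WeakBilin (topDualPairing ℝ W)))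

lemma exists_forall_strongDual_weakDual_eq_apply (ℓ : StrongDual ℝ (WeakDual ℝ W)) :
    ∃ w, ∀ φ : WeakDual ℝ W, ℓ φ = φ w :=
  (LinearMap.dualEmbedding_surjective (topDualPairing ℝ W) ℓ).imp fun _ hw φ =>
    (DFunLike.congr_fun hw φ).symm

end WeakDual

section ProbabilityMeasures

variable {Y : Type*} [TopologicalSpace Y] [CompactSpace Y] [MeasurableSpace Y]
  [OpensMeasurableSpace Y]

lemma integrable_continuousMap (g : C(Y, ℝ)) (σ : Measure Y) [IsFiniteMeasure σ] :
    Integrable g σ :=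
  (BoundedContinuousFunction.mkOfCompact g).integrable σ

lemma eint_continuousMap (g : C(Y, ℝ)) (σ : Measure Y) [IsFiniteMeasure σ] :
    eint σ (fun y => (g y : EReal)) = ((∫ y, g y ∂σ : ℝ) : EReal) :=
  eint_coe σ (integrable_continuousMap g σ)

lemma continuous_integral_continuousMap (g : C(Y, ℝ)) :
    Continuous fun σ : ProbabilityMeasure Y => ∫ y, g y ∂(σ : Measure Y) :=
  ProbabilityMeasure.continuous_integral_boundedContinuousFunction
    (BoundedContinuousFunction.mkOfCompact g)

/-- Integration against a probability measure, as an element of the weak* dual of `C(Y, ℝ)`: this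
is the embedding of `P(Y)` into a locally convex space used for Hahn–Banach separation. -/
def integralFunctional (σ : ProbabilityMeasure Y) : WeakDual ℝ C(Y, ℝ) :=
  LinearMap.mkContinuous
    { toFun := fun g => ∫ y, g y ∂(σ : Measure Y)
      map_add' := fun f g =>
        integral_add (integrable_continuousMap f _) (integrable_continuousMap g _)
      map_smul' := fun c g => integral_const_mul c g }
    1 fun g => by
      simpa using norm_integral_le_of_norm_le_const (μ := (σ : Measure Y))
        (ae_of_all _ g.norm_coe_le_norm)

lemma integralFunctional_apply (σ : ProbabilityMeasure Y) (g : C(Y, ℝ)) :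
    integralFunctional σ g = ∫ y, g y ∂(σ : Measure Y) :=
  rfl

lemma continuous_integralFunctional :
    Continuous (integralFunctional : ProbabilityMeasure Y → WeakDual ℝ C(Y, ℝ)) :=
  WeakDual.continuous_of_continuous_eval continuous_integral_continuousMap

lemma integralFunctional_injective [BorelSpace Y] [HasOuterApproxClosed Y] :
    Function.Injective (integralFunctional : ProbabilityMeasure Y → WeakDual ℝ C(Y, ℝ)) :=
  fun σ τ h => Subtype.ext <| ext_of_forall_integral_eq_of_IsFiniteMeasure
    (μ := (σ : Measure Y)) (ν := (τ : Measure Y)) fun f => DFunLike.congr_fun h f.toContinuousMap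

lemma integralFunctional_mixture {σ₁ σ₂ σ : ProbabilityMeasure Y} {a b : ℝ≥0}
    (h : (σ : Measure Y) = a • (σ₁ : Measure Y) + b • (σ₂ : Measure Y)) :
    integralFunctional σ =
      (a : ℝ) • integralFunctional σ₁ + (b : ℝ) • integralFunctional σ₂ := by
  refine DFunLike.ext _ _ fun g => ?_
  change ∫ y, g y ∂(σ : Measure Y) =
    (a : ℝ) * ∫ y, g y ∂(σ₁ : Measure Y) + (b : ℝ) * ∫ y, g y ∂(σ₂ : Measure Y)
  rw [h, integral_add_measure (integrable_continuousMap g _) (integrable_continuousMap g _),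
    integral_smul_nnreal_measure, integral_smul_nnreal_measure]
  rfl

lemma exists_probabilityMeasure_eq_mixture {Ω : Type*} [MeasurableSpace Ω]
    (σ₁ σ₂ : ProbabilityMeasure Ω) {a b : ℝ≥0} (hab : a + b = 1) :
    ∃ σ : ProbabilityMeasure Ω,
      (σ : Measure Ω) = a • (σ₁ : Measure Ω) + b • (σ₂ : Measure Ω) :=
  ⟨⟨_, ⟨by
    simp only [Measure.add_apply, Measure.smul_apply, measure_univ, ENNReal.smul_def, smul_eq_mul,
      mul_one]
    exact_mod_cast hab⟩⟩, rfl⟩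

end ProbabilityMeasures

section Epigraph

/-- Convexity of an extended-real functional on `P(Y)`. Since `ProbabilityMeasure Y` is not a vector
space, mixtures `a • σ₁ + b • σ₂` are expressed through the underlying measures. -/
def MixtureConvex {Y : Type*} [MeasurableSpace Y] (F : ProbabilityMeasure Y → EReal) : Prop :=
  ∀ (σ₁ σ₂ σ : ProbabilityMeasure Y) (a b : ℝ≥0), a + b = 1 →
    (σ : Measure Y) = a • (σ₁ : Measure Y) + b • (σ₂ : Measure Y) →
    F σ ≤ ((a : ℝ) : EReal) * F σ₁ + ((b : ℝ) : EReal) * F σ₂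

variable {Y : Type*} [TopologicalSpace Y] [CompactSpace Y] [MeasurableSpace Y]
  [OpensMeasurableSpace Y] {F : ProbabilityMeasure Y → EReal}

/-- The epigraph of a functional on `P(Y)`, with probability measures viewed as linear functionals
on `C(Y, ℝ)`. -/
def dualEpigraph (F : ProbabilityMeasure Y → EReal) : Set (WeakDual ℝ C(Y, ℝ) × ℝ) :=
  Prod.map integralFunctional id '' {p : ProbabilityMeasure Y × ℝ | F p.1 ≤ p.2}

lemma mem_dualEpigraph_of_le {σ : ProbabilityMeasure Y} {t : ℝ} (h : F σ ≤ t) :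
    (integralFunctional σ, t) ∈ dualEpigraph F :=
  ⟨(σ, t), h, rfl⟩

lemma le_of_mem_dualEpigraph [BorelSpace Y] [HasOuterApproxClosed Y] {σ : ProbabilityMeasure Y}
    {t : ℝ} (h : (integralFunctional σ, t) ∈ dualEpigraph F) : F σ ≤ t := by
  obtain ⟨⟨σ', t'⟩, hle, heq⟩ := h
  obtain ⟨hσ, rfl⟩ := Prod.ext_iff.1 heq
  exact integralFunctional_injective hσ ▸ hle

lemma mem_dualEpigraph_of_snd_le {φ : WeakDual ℝ C(Y, ℝ)} {s t : ℝ} (h : (φ, s) ∈ dualEpigraph F)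
    (hst : s ≤ t) : (φ, t) ∈ dualEpigraph F := by
  obtain ⟨⟨σ, r⟩, hσ, heq⟩ := h
  obtain ⟨rfl, rfl⟩ := Prod.ext_iff.1 heq
  exact mem_dualEpigraph_of_le (le_trans hσ (EReal.coe_le_coe_iff.2 hst))

lemma le_snd_of_mem_dualEpigraph {m : ℝ} (hm : ∀ σ, (m : EReal) ≤ F σ) :
    ∀ p ∈ dualEpigraph F, m ≤ p.2 :=
  forall_mem_image.2 fun p hp => EReal.coe_le_coe_iff.1 ((hm p.1).trans hp)

lemma isClosed_dualEpigraph [T2Space Y] [BorelSpace Y] (hF : LowerSemicontinuous F) :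
    IsClosed (dualEpigraph F) := by
  have h_epi : IsClosed {p : ProbabilityMeasure Y × ℝ | F p.1 ≤ p.2} :=
    hF.isClosed_epigraph.preimage
      (continuous_id.prodMap continuous_coe_real_ereal : Continuous
        (Prod.map id Real.toEReal : ProbabilityMeasure Y × ℝ → ProbabilityMeasure Y × EReal))
  exact (continuous_integralFunctional.isProperMap.prodMap isProperMap_id).isClosedMap _ h_epi

lemma convex_dualEpigraph (hF : MixtureConvex F) : Convex ℝ (dualEpigraph F) := by
  rintro _ ⟨⟨σ₁, t₁⟩, h₁, rfl⟩ _ ⟨⟨σ₂, t₂⟩, h₂, rfl⟩ a b ha hb hab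
  lift a to ℝ≥0 using ha
  lift b to ℝ≥0 using hb
  have hab' : a + b = 1 := by exact_mod_cast hab
  obtain ⟨σ, hσ⟩ := exists_probabilityMeasure_eq_mixture σ₁ σ₂ hab'
  refine ⟨(σ, a * t₁ + b * t₂), ?_, Prod.ext (integralFunctional_mixture hσ) rfl⟩
  calc F σ ≤ ((a : ℝ) : EReal) * F σ₁ + ((b : ℝ) : EReal) * F σ₂ := hF σ₁ σ₂ σ a b hab' hσ
    _ ≤ ((a : ℝ) : EReal) * t₁ + ((b : ℝ) : EReal) * t₂ :=
      add_le_add (mul_le_mul_of_nonneg_left h₁ (by simp)) (mul_le_mul_of_nonneg_left h₂ (by simp))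
    _ = ((a * t₁ + b * t₂ : ℝ) : EReal) := by norm_cast

end Epigraph

section LegendreTransform

/-- The Legendre transform `g ↦ sup_σ (∫ g dσ - F σ)` of a functional `F` on `P(Y)`, for
extended-real `g`. The operator `TopU 𝒯` is the case `F = 𝒯 (diracP x)`. -/
def legendreTransform {Y : Type*} [MeasurableSpace Y] (F : ProbabilityMeasure Y → EReal)
    (g : Y → EReal) : EReal :=
  ⨆ σ : ProbabilityMeasure Y, eint (σ : Measure Y) g - F σ

section

variable {Y : Type*} [MeasurableSpace Y] {F : ProbabilityMeasure Y → EReal}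

lemma legendreTransform_mono : Monotone (legendreTransform F) := fun _ _ h =>
  iSup_mono fun _ => EReal.sub_le_sub (eint_mono _ h) le_rfl

lemma legendreTransform_le {g : Y → EReal} {M m : ℝ} (hg : ∀ y, g y ≤ M)
    (hF : ∀ σ, (m : EReal) ≤ F σ) : legendreTransform F g ≤ ((M - m : ℝ) : EReal) :=
  iSup_le fun σ => EReal.sub_le_sub (eint_le_of_le _ hg) (hF σ)

lemma eint_sub_legendreTransform_le {σ : ProbabilityMeasure Y} (hF : F σ ≠ ⊥) (g : Y → EReal) :
    eint (σ : Measure Y) g - legendreTransform F g ≤ F σ :=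
  ereal_sub_le_of_sub_le hF
    (le_iSup (fun τ : ProbabilityMeasure Y => eint (τ : Measure Y) g - F τ) σ)

end

section

variable {Y : Type*} [TopologicalSpace Y] [CompactSpace Y] [MeasurableSpace Y]

lemma upperSemicontinuous_eint_sub [OpensMeasurableSpace Y] {W : Type*} [TopologicalSpace W]
    {φ : W → ProbabilityMeasure Y} (hφ : Continuous φ) {G : W → EReal}
    (hG : LowerSemicontinuous G) (g : C(Y, ℝ)) :
    UpperSemicontinuous fun w => eint (φ w : Measure Y) (fun y => (g y : EReal)) - G w := by
  have hint : Continuous fun w => ((∫ y, g y ∂(φ w : Measure Y) : ℝ) : EReal) :=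
    continuous_coe_real_ereal.comp ((continuous_integral_continuousMap g).comp hφ)
  have hneg : UpperSemicontinuous fun w => -G w :=
    continuous_neg.comp_lowerSemicontinuous_antitone hG fun _ _ => EReal.neg_le_neg_iff.2
  simp only [eint_continuousMap]
  exact hint.upperSemicontinuous.add' hneg fun w =>
    EReal.continuousAt_add (.inl (EReal.coe_ne_top _)) (.inl (EReal.coe_ne_bot _))

variable [T2Space Y] [BorelSpace Y]

lemma upperSemicontinuous_legendreTransform {Z : Type*} [TopologicalSpace Z]
    {Φ : Z → ProbabilityMeasure Y → EReal}
    (hΦ : LowerSemicontinuous fun p : Z × ProbabilityMeasure Y => Φ p.1 p.2) (g : C(Y, ℝ)) :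
    UpperSemicontinuous fun z => legendreTransform (Φ z) fun y => (g y : EReal) :=
  upperSemicontinuous_iSup_of_compactSpace (upperSemicontinuous_eint_sub continuous_snd hΦ g)

variable {F : ProbabilityMeasure Y → EReal}

lemma tendsto_legendreTransform_of_antitone (hF : LowerSemicontinuous F) (hF_bot : ∀ σ, F σ ≠ ⊥)
    {f : ℕ → C(Y, ℝ)} (hf : Antitone f) {g : Y → EReal}
    (hlim : ∀ y, Tendsto (fun n => (f n y : EReal)) atTop (𝓝 (g y))) :
    Tendsto (fun n => legendreTransform F fun y => (f n y : EReal)) atTop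
      (𝓝 (legendreTransform F g)) := by
  have hf' : Antitone fun n y => (f n y : EReal) := fun m n hmn y =>
    EReal.coe_le_coe_iff.2 (hf hmn y)
  obtain ⟨C, hC⟩ := exists_forall_coe_continuousMap_le (f 0)
  have hg : ∀ y, g y ≤ C := fun y =>
    le_of_tendsto' (hlim y) fun n => (hf' n.zero_le y).trans (hC y)
  have hanti : Antitone fun n (σ : ProbabilityMeasure Y) =>
      eint (σ : Measure Y) (fun y => (f n y : EReal)) - F σ := fun m n hmn σ =>
    EReal.sub_le_sub (eint_mono _ (hf' hmn)) le_rfl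
  have heint_lim : ∀ σ : ProbabilityMeasure Y,
      Tendsto (fun n => eint (σ : Measure Y) (fun y => (f n y : EReal)) - F σ) atTop
        (𝓝 (eint (σ : Measure Y) g - F σ)) := fun σ =>
    tendsto_ereal_sub
      (.inl (ne_top_of_le_ne_top (EReal.coe_ne_top C) (eint_le_of_le _ hg))) (.inr (hF_bot σ))
      (tendsto_eint_of_antitone _ (fun n => (f n).continuous.measurable.coe_real_ereal) hf' hC hlim)
      tendsto_const_nhds
  have h_eq : legendreTransform F g = ⨅ n, legendreTransform F fun y => (f n y : EReal) :=
    calc legendreTransform F g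
        = ⨆ σ : ProbabilityMeasure Y, ⨅ n, eint (σ : Measure Y) (fun y => (f n y : EReal)) - F σ :=
          iSup_congr fun σ => tendsto_nhds_unique (heint_lim σ)
            (tendsto_atTop_iInf fun m n hmn => hanti hmn σ)
      _ = _ := iSup_iInf_eq_iInf_iSup_of_antitone
          (fun n => upperSemicontinuous_eint_sub continuous_id hF (f n)) hanti
  rw [h_eq]
  exact tendsto_atTop_iInf fun m n hmn => legendreTransform_mono (hf' hmn)

variable [HasOuterApproxClosed Y]

lemma exists_legendreTransform_le (hF : LowerSemicontinuous F) (hconv : MixtureConvex F) {m : ℝ}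
    (hm : ∀ σ, (m : EReal) ≤ F σ) {ν : ProbabilityMeasure Y} {c : ℝ} (hc : c < F ν) :
    ∃ g : C(Y, ℝ), legendreTransform F (fun y => (g y : EReal)) ≤
      ((∫ y, g y ∂(ν : Measure Y) - c : ℝ) : EReal) := by
  have hν : (integralFunctional ν, c) ∉ dualEpigraph F := fun h =>
    hc.not_ge (le_of_mem_dualEpigraph h)
  obtain ⟨ℓ, hℓ⟩ := exists_strongDual_sub_le_of_notMem (isClosed_dualEpigraph hF)
    (convex_dualEpigraph hconv) (fun _ _ _ => mem_dualEpigraph_of_snd_le)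
    (le_snd_of_mem_dualEpigraph hm) hν
  obtain ⟨g, hg⟩ := exists_forall_strongDual_weakDual_eq_apply ℓ
  refine ⟨g, iSup_le fun σ => ?_⟩
  rw [eint_continuousMap]
  induction hσ : F σ with
  | bot => exact absurd (hm σ) (by simp [hσ])
  | top => simp
  | coe t =>
    have h_le : ∫ y, g y ∂(σ : Measure Y) - t ≤ ∫ y, g y ∂(ν : Measure Y) - c := by
      simpa only [hg, integralFunctional_apply] using
        hℓ (integralFunctional σ, t) (mem_dualEpigraph_of_le hσ.le)
    exact_mod_cast h_le

/-- The Fenchel–Moreau theorem on `P(Y)`. -/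
lemma eq_biSup_eint_sub_legendreTransform (hF : LowerSemicontinuous F) (hconv : MixtureConvex F)
    {m : ℝ} (hm : ∀ σ, (m : EReal) ≤ F σ) {S : Set (Y → EReal)}
    (hS : ∀ g : C(Y, ℝ), (fun y => (g y : EReal)) ∈ S) (ν : ProbabilityMeasure Y) :
    F ν = ⨆ g ∈ S, (eint (ν : Measure Y) g - legendreTransform F g) := by
  refine le_antisymm (le_of_forall_lt fun d hd => ?_) (iSup₂_le fun g _ =>
    eint_sub_legendreTransform_le (ne_bot_of_le_ne_bot (EReal.coe_ne_bot m) (hm ν)) g)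
  obtain ⟨c, hdc, hc⟩ := EReal.lt_iff_exists_real_btwn.1 hd
  obtain ⟨g, hg⟩ := exists_legendreTransform_le hF hconv hm hc
  refine hdc.trans_le (le_iSup₂_of_le _ (hS g) ?_)
  calc (c : EReal)
      = ((∫ y, g y ∂(ν : Measure Y) : ℝ) : EReal) -
          ((∫ y, g y ∂(ν : Measure Y) - c : ℝ) : EReal) := by
        rw [← EReal.coe_sub, sub_sub_cancel]
    _ ≤ _ := by
        rw [eint_continuousMap]
        exact EReal.sub_le_sub le_rfl hg

end

end LegendreTransform

section Transfer

lemma TopC_eq_TopU {X Y : Type*} [MeasurableSpace X] [TopologicalSpace Y] [CompactSpace Y]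
    [MeasurableSpace Y] [OpensMeasurableSpace Y]
    (𝒯 : ProbabilityMeasure X → ProbabilityMeasure Y → EReal) (g : C(Y, ℝ)) :
    TopC 𝒯 g = TopU 𝒯 fun y => (g y : EReal) := by
  funext x
  simp only [TopC, TopU, eint_continuousMap]

namespace IsBLT

variable {X Y : Type*} [TopologicalSpace X] [MeasurableSpace X] [OpensMeasurableSpace X]
  [TopologicalSpace Y] [MeasurableSpace Y]
  {𝒯 : ProbabilityMeasure X → ProbabilityMeasure Y → EReal}

section

variable [OpensMeasurableSpace Y]

lemma ne_bot (h : IsBLT 𝒯) (μ : ProbabilityMeasure X) (ν : ProbabilityMeasure Y) : 𝒯 μ ν ≠ ⊥ :=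
  h.1 μ ν

lemma exists_forall_le (h : IsBLT 𝒯) : ∃ m : ℝ, ∀ μ ν, (m : EReal) ≤ 𝒯 μ ν :=
  h.2.2.1

lemma mixtureConvex (h : IsBLT 𝒯) (μ : ProbabilityMeasure X) : MixtureConvex (𝒯 μ) :=
  fun σ₁ σ₂ σ a b hab hσ =>
    h.2.2.2.1 μ μ σ₁ σ₂ μ σ a b hab (by rw [← add_smul, hab, one_smul]) hσ

lemma lowerSemicontinuous (h : IsBLT 𝒯) :
    LowerSemicontinuous fun p : ProbabilityMeasure X × ProbabilityMeasure Y => 𝒯 p.1 p.2 :=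
  h.2.2.2.2.1

lemma lowerSemicontinuous_right (h : IsBLT 𝒯) (μ : ProbabilityMeasure X) :
    LowerSemicontinuous (𝒯 μ) :=
  h.lowerSemicontinuous.comp (continuous_const.prodMk continuous_id)

lemma legendreTransform_continuousMap [CompactSpace Y] (h : IsBLT 𝒯) (μ : ProbabilityMeasure X)
    (g : C(Y, ℝ)) :
    legendreTransform (𝒯 μ) (fun y => (g y : EReal)) =
      eint (μ : Measure X) (TopU 𝒯 fun y => (g y : EReal)) := by
  rw [← TopC_eq_TopU, ← h.2.2.2.2.2 μ g]
  simp only [legendreTransform, eint_continuousMap]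

end

lemma measurable_TopU [CompactSpace Y] [T2Space Y] [BorelSpace Y] (h : IsBLT 𝒯) (g : C(Y, ℝ)) :
    Measurable (TopU 𝒯 fun y => (g y : EReal)) :=
  have h_dirac : Continuous fun p : X × ProbabilityMeasure Y => (diracP p.1, p.2) :=
    continuous_diracProba.prodMap continuous_id
  (upperSemicontinuous_legendreTransform (Φ := fun x => 𝒯 (diracP x))
    (h.lowerSemicontinuous.comp h_dirac) g).measurable

lemma legendreTransform_eq_eint_TopU {X Y : Type*} [TopologicalSpace X] [MeasurableSpace X]
    [OpensMeasurableSpace X] [MetricSpace Y] [CompactSpace Y] [MeasurableSpace Y] [BorelSpace Y]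
    {𝒯 : ProbabilityMeasure X → ProbabilityMeasure Y → EReal} (h : IsBLT 𝒯)
    (μ : ProbabilityMeasure X) {g : Y → EReal} (hg : UpperSemicontinuous g) {M : ℝ}
    (hM : ∀ y, g y ≤ M) : legendreTransform (𝒯 μ) g = eint (μ : Measure X) (TopU 𝒯 g) := by
  obtain ⟨f, hf, hlim⟩ := exists_antitone_continuousMap_tendsto hg hM
  obtain ⟨C, hC⟩ := exists_forall_coe_continuousMap_le (f 0)
  obtain ⟨m, hm⟩ := h.exists_forall_le
  have hlim_legendre : ∀ μ : ProbabilityMeasure X,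
      Tendsto (fun n => legendreTransform (𝒯 μ) fun y => (f n y : EReal)) atTop
        (𝓝 (legendreTransform (𝒯 μ) g)) := fun μ =>
    tendsto_legendreTransform_of_antitone (h.lowerSemicontinuous_right μ) (h.ne_bot μ) hf hlim
  have hlim_eint : Tendsto (fun n => eint (μ : Measure X) (TopU 𝒯 fun y => (f n y : EReal))) atTop
      (𝓝 (eint (μ : Measure X) (TopU 𝒯 g))) :=
    tendsto_eint_of_antitone _ (fun n => h.measurable_TopU (f n))
      (fun _ _ hmn _ => legendreTransform_mono fun y => EReal.coe_le_coe_iff.2 (hf hmn y))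
      (fun x => legendreTransform_le hC (hm (diracP x)))
      (fun x => hlim_legendre (diracP x))
  refine tendsto_nhds_unique (hlim_legendre μ) ?_
  simpa only [h.legendreTransform_continuousMap μ] using hlim_eint

end IsBLT

end Transfer

theorem blt_duality_usc_extension_general
    {X Y : Type*} [TopologicalSpace X] [MeasurableSpace X] [OpensMeasurableSpace X]
    [MetricSpace Y] [CompactSpace Y] [MeasurableSpace Y] [BorelSpace Y]
    (𝒯 : ProbabilityMeasure X → ProbabilityMeasure Y → EReal) (h𝒯 : IsBLT 𝒯) :
    (∀ (μ : ProbabilityMeasure X) (ν : ProbabilityMeasure Y),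
      𝒯 μ ν = ⨆ g ∈ {g : Y → EReal | UpperSemicontinuous g ∧
            (∃ M : ℝ, ∀ y, g y ≤ (M : EReal)) ∧ (∃ m : ℝ, ∀ y, (m : EReal) ≤ g y)},
          (eint (ν : Measure Y) g - eint (μ : Measure X) (TopU 𝒯 g))) ∧
    (∀ (μ : ProbabilityMeasure X) (g : Y → EReal), UpperSemicontinuous g →
        (∃ M : ℝ, ∀ y, g y ≤ (M : EReal)) →
        (⨆ σ : ProbabilityMeasure Y, eint (σ : Measure Y) g - 𝒯 μ σ)
          = eint (μ : Measure X) (TopU 𝒯 g)) := by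
  refine ⟨fun μ ν => ?_, fun μ g hg ⟨M, hM⟩ => h𝒯.legendreTransform_eq_eint_TopU μ hg hM⟩
  obtain ⟨m, hm⟩ := h𝒯.exists_forall_le
  refine (eq_biSup_eint_sub_legendreTransform (h𝒯.lowerSemicontinuous_right μ)
    (h𝒯.mixtureConvex μ) (hm μ) (fun g => ?_) ν).trans
      (biSup_congr fun g hg => by rw [h𝒯.legendreTransform_eq_eint_TopU μ hg.1 hg.2.1.choose_spec])
  exact ⟨upperSemicontinuous_coe_continuousMap g, exists_forall_coe_continuousMap_le g,
    exists_forall_le_coe_continuousMap g⟩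

/-- The duality formulas of a backward linear transfer extend from continuous
functions to upper semicontinuous bounded-above functions. -/
theorem blt_duality_usc_extension
    {X Y : Type*} [MetricSpace X] [CompactSpace X] [MeasurableSpace X] [BorelSpace X]
    [MetricSpace Y] [CompactSpace Y] [MeasurableSpace Y] [BorelSpace Y]
    (𝒯 : ProbabilityMeasure X → ProbabilityMeasure Y → EReal) (h𝒯 : IsBLT 𝒯) :
    (∀ (μ : ProbabilityMeasure X) (ν : ProbabilityMeasure Y),
      𝒯 μ ν = ⨆ g ∈ {g : Y → EReal | UpperSemicontinuous g ∧
            (∃ M : ℝ, ∀ y, g y ≤ (M : EReal)) ∧ (∃ m : ℝ, ∀ y, (m : EReal) ≤ g y)},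
          (eint (ν : Measure Y) g - eint (μ : Measure X) (TopU 𝒯 g))) ∧
    (∀ (μ : ProbabilityMeasure X) (g : Y → EReal), UpperSemicontinuous g →
        (∃ M : ℝ, ∀ y, g y ≤ (M : EReal)) →
        (⨆ σ : ProbabilityMeasure Y, eint (σ : Measure Y) g - 𝒯 μ σ)
          = eint (μ : Measure X) (TopU 𝒯 g)) :=
  blt_duality_usc_extension_general 𝒯 h𝒯
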